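/- arXiv:2110.06037 — 5 statements merged into one kernel-verified Lean document; each statement's English description precedes it below -/
import Mathlib

section
/- Let Λ be a finite nonempty type and m₁, m₂ ≥ 1. Consider the directed graph with vertices: a source s, a chain u_1, …, u_{m₁}, a chain w_1, …, w_{m₂}, and a sink t, and edges s→u_1, u_1→u_2, …, u_{m₁}→t and s→w_1, …, w_{m₂}→t. Let each vertex v have cost c_v : Λ → ℝ and each edge e have adapt cost a_e : Λ → Λ → ℝ; the cost of an assignment σ of schemas to all vertices is the sum of all vertex costs plus all edge adapt costs. For κ ∈ Λ define the constrained branch values D¹_1(μ; κ) = c_{u_1}(μ) + a_{s→u_1}(κ, μ) and D¹_{j+1}(μ; κ) = c_{u_{j+1}}(μ) + min_{ν}(D¹_j(ν; κ) + a_{u_j→u_{j+1}}(ν, μ)), and analogously D²_j(μ; κ) for the w-chain. Then the minimum of cost(σ) over all assignments σ equals min over κ, λ ∈ Λ of [c_s(κ) + c_t(λ) + min_{μ}(D¹_{m₁}(μ; κ) + a_{u_{m₁}→t}(μ, λ)) + min_{ν}(D²_{m₂}(ν; κ) + a_{w_{m₂}→t}(ν, λ))]. -/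
/-!
With the source schema `κ` fixed, the two chains interact only through the sink schema, so the
cost splits as `cs κ + ct l` plus one term for each chain. For a single chain, `chainDP_le` and
`exists_chainDP_eq` say that the DP value at the last layer with schema `μ` is a lower bound for
the cost of every assignment of the chain ending in `μ`, and that this bound is attained. Both
are inductions on the length of the chain that peel off the last layer (Bellman's principle).
The two global minima are then compared by antisymmetry: the lower bounds give `≥`, and gluing
optimal assignments of the two chains gives `≤`.
-/

/-- Cost of the assignment `f` of schemas to a chain of `n + 1` layers, with layer costs `c` and
adapt costs `a` on the internal edges. `b` is the adapt cost of the edge entering the first layer,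
the schema of the source being fixed. The edge leaving the last layer is not counted. -/
def chainCost {Λ : Type*} {n : ℕ} (c : Fin (n + 1) → Λ → ℝ) (b : Λ → ℝ)
    (a : Fin n → Λ → Λ → ℝ) (f : Fin (n + 1) → Λ) : ℝ :=
  ∑ j, c j (f j) + b (f 0) + ∑ j : Fin n, a j (f j.castSucc) (f j.succ)

lemma chainCost_succ {Λ : Type*} {n : ℕ} (c : Fin (n + 2) → Λ → ℝ) (b : Λ → ℝ)
    (a : Fin (n + 1) → Λ → Λ → ℝ) (f : Fin (n + 2) → Λ) :
    chainCost c b a f =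
      chainCost (fun j => c j.castSucc) b (fun j => a j.castSucc) (fun j => f j.castSucc)
        + a (Fin.last n) (f (Fin.last n).castSucc) (f (Fin.last (n + 1)))
        + c (Fin.last (n + 1)) (f (Fin.last (n + 1))) := by
  unfold chainCost
  rw [Fin.sum_univ_castSucc, Fin.sum_univ_castSucc (fun j => a j (f j.castSucc) (f j.succ))]
  simp only [Fin.castSucc_zero, Fin.succ_castSucc, Fin.succ_last]
  ring

lemma chainDP_le {Λ : Type*} [Fintype Λ] [Nonempty Λ] {n : ℕ} (c : Fin (n + 1) → Λ → ℝ)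
    (b : Λ → ℝ) (a : Fin n → Λ → Λ → ℝ) (D : Fin (n + 1) → Λ → ℝ)
    (h0 : ∀ μ, D 0 μ = c 0 μ + b μ)
    (hs : ∀ (j : Fin n) (μ : Λ), D j.succ μ = c j.succ μ
      + Finset.univ.inf' Finset.univ_nonempty (fun ν : Λ => D j.castSucc ν + a j ν μ))
    (f : Fin (n + 1) → Λ) :
    D (Fin.last n) (f (Fin.last n)) ≤ chainCost c b a f := by
  induction n with
  | zero => simp [chainCost, h0]
  | succ n ih =>
    have key := ih (fun j => c j.castSucc) (fun j => a j.castSucc) (fun j => D j.castSucc)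
      h0 (fun j μ => hs j.castSucc μ) (fun j => f j.castSucc)
    have hle := Finset.inf'_le
      (fun ν : Λ => D (Fin.last n).castSucc ν + a (Fin.last n) ν (f (Fin.last (n + 1))))
      (Finset.mem_univ (f (Fin.last n).castSucc))
    have hD := hs (Fin.last n) (f (Fin.last (n + 1)))
    rw [Fin.succ_last] at hD
    rw [chainCost_succ]
    linarith

lemma exists_chainDP_eq {Λ : Type*} [Fintype Λ] [Nonempty Λ] {n : ℕ} (c : Fin (n + 1) → Λ → ℝ)
    (b : Λ → ℝ) (a : Fin n → Λ → Λ → ℝ) (D : Fin (n + 1) → Λ → ℝ)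
    (h0 : ∀ μ, D 0 μ = c 0 μ + b μ)
    (hs : ∀ (j : Fin n) (μ : Λ), D j.succ μ = c j.succ μ
      + Finset.univ.inf' Finset.univ_nonempty (fun ν : Λ => D j.castSucc ν + a j ν μ))
    (μ : Λ) :
    ∃ f : Fin (n + 1) → Λ, f (Fin.last n) = μ ∧ chainCost c b a f = D (Fin.last n) μ := by
  induction n generalizing μ with
  | zero => exact ⟨fun _ => μ, rfl, by simp [chainCost, h0]⟩
  | succ n ih =>
    obtain ⟨ν, -, hν⟩ := Finset.exists_mem_eq_inf' Finset.univ_nonempty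
      (fun ν : Λ => D (Fin.last n).castSucc ν + a (Fin.last n) ν μ)
    obtain ⟨g, hg, hcost⟩ := ih (fun j => c j.castSucc) (fun j => a j.castSucc)
      (fun j => D j.castSucc) h0 (fun j μ => hs j.castSucc μ) ν
    refine ⟨Fin.snoc (α := fun _ => Λ) g μ, Fin.snoc_last _ _, ?_⟩
    have hD := hs (Fin.last n) μ
    rw [Fin.succ_last] at hD
    rw [chainCost_succ]
    simp only [Fin.snoc_castSucc, Fin.snoc_last]
    rw [hcost, hg, hD, hν]
    ring


/-- **Proposition 2 (optimality of constrained DP) for a branching net.**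
The net has a source `s`, two internally disjoint chains `u_0, …, u_{m₁-1}` and
`w_0, …, w_{m₂-1}`, and a sink `t`, with edges `s→u_0, u_0→u_1, …, u_{m₁-1}→t`
and `s→w_0, …, w_{m₂-1}→t`.  An assignment is a tuple `(κ, f, g, l)` of schemas
for `s`, the `u`-chain, the `w`-chain, and `t`; its cost is the sum of all
vertex costs plus all edge adapt costs.  `D₁ j μ κ` (resp. `D₂`) is the
constrained DP value of the `u`-chain (resp. `w`-chain) prefix ending at index
`j` with schema `μ`, subject to the constraint that `s` has schema `κ` (the cost
`cs κ` of `s` itself not included).  The global minimum cost equals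
`min_{κ,l} [cs κ + ct l + min_μ (D₁ last μ κ + aut μ l) + min_ν (D₂ last ν κ + awt ν l)]`. -/
theorem constrained_dp_branching_net (Λ : Type*) [Fintype Λ] [Nonempty Λ]
    {m₁ m₂ : ℕ} (hm₁ : 1 ≤ m₁) (hm₂ : 1 ≤ m₂)
    (cs ct : Λ → ℝ) (cu : Fin m₁ → Λ → ℝ) (cw : Fin m₂ → Λ → ℝ)
    (asu : Λ → Λ → ℝ) (au : Fin (m₁ - 1) → Λ → Λ → ℝ) (aut : Λ → Λ → ℝ)
    (asw : Λ → Λ → ℝ) (aw : Fin (m₂ - 1) → Λ → Λ → ℝ) (awt : Λ → Λ → ℝ)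
    (D₁ : Fin m₁ → Λ → Λ → ℝ) (D₂ : Fin m₂ → Λ → Λ → ℝ)
    (hD₁0 : ∀ μ κ : Λ, D₁ ⟨0, by omega⟩ μ κ = cu ⟨0, by omega⟩ μ + asu κ μ)
    (hD₁s : ∀ (j : Fin (m₁ - 1)) (μ κ : Λ),
      D₁ ⟨j.val + 1, by have := j.isLt; omega⟩ μ κ
        = cu ⟨j.val + 1, by have := j.isLt; omega⟩ μ
          + Finset.univ.inf' Finset.univ_nonempty
              (fun ν : Λ => D₁ ⟨j.val, by have := j.isLt; omega⟩ ν κ + au j ν μ))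
    (hD₂0 : ∀ μ κ : Λ, D₂ ⟨0, by omega⟩ μ κ = cw ⟨0, by omega⟩ μ + asw κ μ)
    (hD₂s : ∀ (j : Fin (m₂ - 1)) (μ κ : Λ),
      D₂ ⟨j.val + 1, by have := j.isLt; omega⟩ μ κ
        = cw ⟨j.val + 1, by have := j.isLt; omega⟩ μ
          + Finset.univ.inf' Finset.univ_nonempty
              (fun ν : Λ => D₂ ⟨j.val, by have := j.isLt; omega⟩ ν κ + aw j ν μ)) :
    Finset.univ.inf' Finset.univ_nonempty
        (fun σ : Λ × (Fin m₁ → Λ) × (Fin m₂ → Λ) × Λ =>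
          cs σ.1 + ct σ.2.2.2
            + (∑ j : Fin m₁, cu j (σ.2.1 j)) + (∑ j : Fin m₂, cw j (σ.2.2.1 j))
            + asu σ.1 (σ.2.1 ⟨0, by omega⟩)
            + (∑ j : Fin (m₁ - 1),
                au j (σ.2.1 ⟨j.val, by have := j.isLt; omega⟩)
                     (σ.2.1 ⟨j.val + 1, by have := j.isLt; omega⟩))
            + aut (σ.2.1 ⟨m₁ - 1, by omega⟩) σ.2.2.2
            + asw σ.1 (σ.2.2.1 ⟨0, by omega⟩)
            + (∑ j : Fin (m₂ - 1),
                aw j (σ.2.2.1 ⟨j.val, by have := j.isLt; omega⟩)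
                     (σ.2.2.1 ⟨j.val + 1, by have := j.isLt; omega⟩))
            + awt (σ.2.2.1 ⟨m₂ - 1, by omega⟩) σ.2.2.2)
      = Finset.univ.inf' Finset.univ_nonempty
          (fun p : Λ × Λ =>
            cs p.1 + ct p.2
              + Finset.univ.inf' Finset.univ_nonempty
                  (fun μ : Λ => D₁ ⟨m₁ - 1, by omega⟩ μ p.1 + aut μ p.2)
              + Finset.univ.inf' Finset.univ_nonempty
                  (fun ν : Λ => D₂ ⟨m₂ - 1, by omega⟩ ν p.1 + awt ν p.2)) := by
  obtain ⟨n₁, rfl⟩ : ∃ n, m₁ = n + 1 := ⟨m₁ - 1, by omega⟩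
  obtain ⟨n₂, rfl⟩ : ∃ n, m₂ = n + 1 := ⟨m₂ - 1, by omega⟩
  -- `n + 1 - 1` reduces definitionally to `n`, so the DP hypotheses have the shape that the
  -- chain lemmas expect.
  have le₁ := fun κ => chainDP_le cu (asu κ) au (fun j μ => D₁ j μ κ)
    (fun μ => hD₁0 μ κ) (fun j μ => hD₁s j μ κ)
  have le₂ := fun κ => chainDP_le cw (asw κ) aw (fun j μ => D₂ j μ κ)
    (fun μ => hD₂0 μ κ) (fun j μ => hD₂s j μ κ)
  have ex₁ := fun κ => exists_chainDP_eq cu (asu κ) au (fun j μ => D₁ j μ κ)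
    (fun μ => hD₁0 μ κ) (fun j μ => hD₁s j μ κ)
  have ex₂ := fun κ => exists_chainDP_eq cw (asw κ) aw (fun j μ => D₂ j μ κ)
    (fun μ => hD₂0 μ κ) (fun j μ => hD₂s j μ κ)
  have split : ∀ (κ : Λ) (f : Fin (n₁ + 1) → Λ) (g : Fin (n₂ + 1) → Λ) (l : Λ),
      cs κ + ct l + (∑ j, cu j (f j)) + (∑ j, cw j (g j)) + asu κ (f 0)
        + (∑ j : Fin n₁, au j (f j.castSucc) (f j.succ)) + aut (f (Fin.last n₁)) l
        + asw κ (g 0) + (∑ j : Fin n₂, aw j (g j.castSucc) (g j.succ))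
        + awt (g (Fin.last n₂)) l
      = cs κ + ct l + (chainCost cu (asu κ) au f + aut (f (Fin.last n₁)) l)
        + (chainCost cw (asw κ) aw g + awt (g (Fin.last n₂)) l) := by
    intro κ f g l
    unfold chainCost
    ring
  apply le_antisymm
  · refine Finset.le_inf' _ _ fun p _ => ?_
    obtain ⟨κ, l⟩ := p
    obtain ⟨μ, -, hμ⟩ := Finset.exists_mem_eq_inf' Finset.univ_nonempty
      (fun μ : Λ => D₁ (Fin.last n₁) μ κ + aut μ l)
    obtain ⟨ν, -, hν⟩ := Finset.exists_mem_eq_inf' Finset.univ_nonempty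
      (fun ν : Λ => D₂ (Fin.last n₂) ν κ + awt ν l)
    obtain ⟨f, hf, hfc⟩ := ex₁ κ μ
    obtain ⟨g, hg, hgc⟩ := ex₂ κ ν
    refine (Finset.inf'_le _ (Finset.mem_univ (κ, f, g, l))).trans ?_
    refine (split κ f g l).le.trans ?_
    rw [hfc, hgc, hf, hg]
    exact (congrArg₂ (fun x y => cs κ + ct l + x + y) hμ hν).ge
  · refine Finset.le_inf' _ _ fun σ _ => ?_
    obtain ⟨κ, f, g, l⟩ := σ
    refine (Finset.inf'_le _ (Finset.mem_univ (κ, l))).trans ?_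
    refine le_trans ?_ (split κ f g l).ge
    have h₁ := Finset.inf'_le (fun μ : Λ => D₁ (Fin.last n₁) μ κ + aut μ l)
      (Finset.mem_univ (f (Fin.last n₁)))
    have h₂ := Finset.inf'_le (fun ν : Λ => D₂ (Fin.last n₂) ν κ + awt ν l)
      (Finset.mem_univ (g (Fin.last n₂)))
    exact add_le_add (add_le_add le_rfl (h₁.trans (add_le_add (le₁ κ f) le_rfl)))
      (h₂.trans (add_le_add (le₂ κ g) le_rfl))
end

section
/- Let V be a finite type, Λ a finite nonempty type, c : V → Λ → ℝ vertex costs, and let the edge set be partitioned into finite sets E_1, …, E_k with adapt costs a_e : Λ → Λ → ℝ for each edge e. Let A_1, …, A_k ⊆ V satisfy ⋃_m A_m = V, every edge in E_m has both endpoints in A_m, and A_m ∩ A_{m'} = C for all m ≠ m', for a fixed set C ⊆ V. Then for every τ : C → Λ, the minimum over all σ : V → Λ with σ|_C = τ of [Σ_{v ∈ V} c_v(σ v) + Σ_m Σ_{(u,w) ∈ E_m} a_{(u,w)}(σ u, σ w)] equals Σ_{v ∈ C} c_v(τ v) + Σ_{m=1}^{k} [min over σ_m : A_m → Λ with σ_m|_C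 = τ of (Σ_{v ∈ A_m \ C} c_v(σ_m v) + Σ_{(u,w) ∈ E_m} a_{(u,w)}(σ_m u, σ_m w))]. -/
/-!
The vertex set is the disjoint union of `C` and the sets `A m \ C`
(`sum_univ_eq_core_add_branches`), so the cost of a `σ` extending `τ` is the cost of `τ` on `C`
plus the branch costs of the restrictions `σ|_{A m}`; this bounds the global minimum from below.
Conversely, branch assignments that all extend `τ` agree on the overlaps of the `A m`, which lie
in `C`, and hence glue to a global assignment (`exists_glue`). Gluing branch minimizers, which
exist since there are finitely many assignments, attains the bound.
-/

lemma sum_univ_eq_core_add_branches {V ι : Type*} [Fintype V] [DecidableEq V] [Fintype ι]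
    (A : ι → Finset V) (C : Finset V) (hcover : ∀ v, ∃ m, v ∈ A m)
    (hint : ∀ m m', m ≠ m' → A m ∩ A m' = C) (f : V → ℝ) :
    ∑ v, f v = ∑ v ∈ C, f v + ∑ m, ∑ v ∈ A m \ C, f v := by
  have hdisj : ((Finset.univ : Finset ι) : Set ι).PairwiseDisjoint (fun m => A m \ C) := by
    intro m _ m' _ hne
    refine Finset.disjoint_left.mpr fun v hv hv' => ?_
    rw [Finset.mem_sdiff] at hv hv'
    exact hv.2 (hint m m' hne ▸ Finset.mem_inter.mpr ⟨hv.1, hv'.1⟩)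
  have hcompl : Finset.univ.biUnion (fun m => A m \ C) = Cᶜ := by
    ext v
    simp [hcover v]
  rw [← Finset.sum_biUnion hdisj, hcompl, Finset.sum_add_sum_compl]

lemma exists_glue {V Λ ι : Type*} [DecidableEq V]
    (A : ι → Finset V) (C : Finset V) (hcover : ∀ v, ∃ m, v ∈ A m)
    (hint : ∀ m m', m ≠ m' → A m ∩ A m' = C) (hCsub : ∀ m, C ⊆ A m)
    (τ : {x // x ∈ C} → Λ) (s : ∀ m, {v // v ∈ A m} → Λ)
    (hs : ∀ m (v : {x // x ∈ C}), s m ⟨v.1, hCsub m v.2⟩ = τ v) :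
    ∃ σ : V → Λ, (∀ v : {x // x ∈ C}, σ v.1 = τ v) ∧ ∀ m, (fun v => σ v.1) = s m := by
  choose i hi using hcover
  refine ⟨fun v => s (i v) ⟨v, hi v⟩, fun v => hs (i v.1) v, fun m => funext ?_⟩
  rintro ⟨v, hv⟩
  by_cases h : i v = m
  · subst h
    rfl
  · have hC : v ∈ C := hint _ _ h ▸ Finset.mem_inter.mpr ⟨hi v, hv⟩
    exact (hs (i v) ⟨v, hC⟩).trans (hs m ⟨v, hC⟩).symm

/-- **Decomposition lemma for the merge step of DPRS.**  The edge set of the net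
is partitioned into finite sets `E m` (`m : Fin k`) with adapt costs `a e`, and
the vertex sets `A m` cover `V`, contain the endpoints of the respective edges,
and pairwise intersect exactly in a common constrained set `C ⊆ A m`.  Then for
every constraint `τ : C → Λ`, the constrained minimum of the total cost over
`σ : V → Λ` with `σ|_C = τ` splits into the cost of `C` plus the sum over `m` of
the independent constrained minima over the parts `A m`. -/
theorem dprs_merge_decomposition (V : Type*) [Fintype V] [DecidableEq V]
    (Λ : Type*) [Fintype Λ] [Nonempty Λ]
    (c : V → Λ → ℝ) {k : ℕ}
    (E : Fin k → Finset (V × V))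
    (hEdisj : ∀ m m' : Fin k, m ≠ m' → Disjoint (E m) (E m'))
    (a : V × V → Λ → Λ → ℝ)
    (A : Fin k → Finset V) (C : Finset V)
    (hcover : ∀ v : V, ∃ m : Fin k, v ∈ A m)
    (hend : ∀ (m : Fin k), ∀ e ∈ E m, e.1 ∈ A m ∧ e.2 ∈ A m)
    (hint : ∀ m m' : Fin k, m ≠ m' → A m ∩ A m' = C)
    (hCsub : ∀ m : Fin k, C ⊆ A m) :
    ∀ τ : {x // x ∈ C} → Λ,
      sInf {x : ℝ | ∃ σ : V → Λ, (∀ v : {x // x ∈ C}, σ v.1 = τ v) ∧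
          x = (∑ v : V, c v (σ v))
            + ∑ m : Fin k, ∑ e ∈ E m, a e (σ e.1) (σ e.2)}
        = (∑ v ∈ C.attach, c v.1 (τ v))
          + ∑ m : Fin k,
              sInf {x : ℝ | ∃ σm : {v // v ∈ A m} → Λ,
                (∀ v : {x // x ∈ C}, σm ⟨v.1, hCsub m v.2⟩ = τ v) ∧
                x = (∑ v ∈ (A m \ C).attach,
                      c v.1 (σm ⟨v.1, (Finset.mem_sdiff.mp v.2).1⟩))
                  + ∑ e ∈ (E m).attach,
                      a e.1 (σm ⟨e.1.1, (hend m e.1 e.2).1⟩)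
                            (σm ⟨e.1.2, (hend m e.1 e.2).2⟩)} := by
  intro τ
  -- `F m s` is the cost of branch `m` under `s`, excluding the vertices of `C`.
  let F : ∀ m : Fin k, ({v // v ∈ A m} → Λ) → ℝ := fun m s =>
    (∑ v ∈ (A m \ C).attach, c v.1 (s ⟨v.1, (Finset.mem_sdiff.mp v.2).1⟩))
      + ∑ e ∈ (E m).attach,
          a e.1 (s ⟨e.1.1, (hend m e.1 e.2).1⟩) (s ⟨e.1.2, (hend m e.1 e.2).2⟩)
  let S : Fin k → Set ℝ := fun m => {x : ℝ | ∃ s : {v // v ∈ A m} → Λ,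
    (∀ v : {x // x ∈ C}, s ⟨v.1, hCsub m v.2⟩ = τ v) ∧ x = F m s}
  have hfin : ∀ m, (S m).Finite := fun m =>
    (Set.finite_range (F m)).subset (by rintro x ⟨s, -, rfl⟩; exact ⟨s, rfl⟩)
  have hne : ∀ m, (S m).Nonempty := fun m =>
    ⟨_, fun v => if h : v.1 ∈ C then τ ⟨v.1, h⟩ else Classical.arbitrary Λ,
      fun v => by simp, rfl⟩
  have hsplit : ∀ σ : V → Λ, (∀ v : {x // x ∈ C}, σ v.1 = τ v) →
      (∑ v : V, c v (σ v)) + ∑ m : Fin k, ∑ e ∈ E m, a e (σ e.1) (σ e.2)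
        = (∑ v ∈ C.attach, c v.1 (τ v)) + ∑ m : Fin k, F m (fun v => σ v.1) := by
    intro σ hσ
    have hC : ∑ v ∈ C.attach, c v.1 (τ v) = ∑ v ∈ C, c v (σ v) := by
      rw [← Finset.sum_attach C]
      exact Finset.sum_congr rfl fun v _ => by rw [hσ v]
    have hF : ∀ m, F m (fun v => σ v.1)
        = ∑ v ∈ A m \ C, c v (σ v) + ∑ e ∈ E m, a e (σ e.1) (σ e.2) := fun m =>
      congrArg₂ (· + ·) (Finset.sum_attach (A m \ C) fun v => c v (σ v))
        (Finset.sum_attach (E m) fun e => a e (σ e.1) (σ e.2))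
    rw [hC, sum_univ_eq_core_add_branches A C hcover hint, Finset.sum_congr rfl fun m _ => hF m,
      Finset.sum_add_distrib, add_assoc]
  change _ = (∑ v ∈ C.attach, c v.1 (τ v)) + ∑ m : Fin k, sInf (S m)
  refine IsLeast.csInf_eq ⟨?_, ?_⟩
  · choose s hs hsmin using fun m => (hne m).csInf_mem (hfin m)
    obtain ⟨σ, hσ, hres⟩ := exists_glue A C hcover hint hCsub τ s hs
    refine ⟨σ, hσ, ?_⟩
    rw [hsplit σ hσ]
    exact congrArg _ (Finset.sum_congr rfl fun m _ => by rw [hres m, hsmin m])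
  · rintro x ⟨σ, hσ, rfl⟩
    rw [hsplit σ hσ]
    gcongr with m
    exact csInf_le (hfin m).bddBelow ⟨fun v => σ v.1, fun v => hσ v, rfl⟩
end

section
/- Let n ≥ 1 and let E : Fin n → Fin n → Prop be a directed edge relation such that E u v implies u < v (so the graph is a DAG in topological order). Let t : Fin n and assume every vertex has a directed path to t. Let i, j : Fin n with i ≠ j, and assume every directed path from i to t passes through j. Let B = { v : Fin n | v lies on some directed path from i to j }. Then for every edge (u, w) with E u w, if u ∈ B and u ≠ j, then w ∈ B. -/
/-!
Let `u ≠ j` lie on a path from `i` to `j`, and let `E u w`. Follow that path up to `u`, step to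
`w`, and continue along any path from `w` to `t`. This path from `i` to `t` must contain `j`. Edges
increase the index, so `j` does not occur up to `u`; hence `j` occurs in the part from `w` to `t`,
and truncating there gives a path from `i` to `j` through `w`.
-/

/-- A directed path from `x` to `y` along the edge relation `E`: a nonempty list
of vertices whose consecutive members are joined by edges, starting at `x` and
ending at `y`. -/
def DirPath {n : ℕ} (E : Fin n → Fin n → Prop) (x y : Fin n)
    (p : List (Fin n)) : Prop :=
  p.Chain' E ∧ p.head? = some x ∧ p.getLast? = some y

/-- **Separation property ('if' direction of Proposition 3).**  In a DAG on
`Fin n` whose edges respect the topological order, with an output `t` reachable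
from every vertex, if every directed path from `i` to `t` passes through `j`
(`i ≠ j`), then the region `B` of vertices lying on some directed path from `i`
to `j` is closed under edges leaving vertices other than `j`: every edge
`(u, w)` with `u ∈ B`, `u ≠ j` satisfies `w ∈ B`. -/
theorem relax_constraint_separation {n : ℕ} (hn : 1 ≤ n)
    (E : Fin n → Fin n → Prop)
    (hE : ∀ u v : Fin n, E u v → u < v)
    (t : Fin n)
    (hreach : ∀ v : Fin n, ∃ p : List (Fin n), DirPath E v t p)
    (i j : Fin n) (hij : i ≠ j)
    (hthrough : ∀ p : List (Fin n), DirPath E i t p → j ∈ p) :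
    ∀ u w : Fin n, E u w →
      (∃ p : List (Fin n), DirPath E i j p ∧ u ∈ p) → u ≠ j →
      ∃ p : List (Fin n), DirPath E i j p ∧ w ∈ p := by
  rintro u w huw ⟨p, ⟨hpc, hph, hpl⟩, hup⟩ huj
  obtain ⟨q, hqc, hqh, hql⟩ := hreach w
  obtain ⟨a, b, rfl⟩ := List.append_of_mem hup
  have hpc' : List.IsChain E (a ++ u :: b) := hpc
  have hqc' : List.IsChain E q := hqc
  have hne : q ≠ [] := by rintro rfl; simp at hqh
  -- Paths are strictly increasing, so `j`, being last, cannot occur before `u`.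
  have hja : j ∉ a := by
    intro hj
    have hs : List.Pairwise (· < ·) (a ++ u :: b) :=
      (hpc'.imp hE).pairwise
    have hlast : j ∈ u :: b := by
      rw [List.getLast?_append_of_ne_nil _ (by simp)] at hpl
      exact List.mem_of_getLast? hpl
    exact lt_irrefl j ((List.pairwise_append.1 hs).2.2 j hj j hlast)
  have hau : List.IsChain E (a ++ [u]) := by
    have h : a ++ u :: b = (a ++ [u]) ++ b := by simp
    rw [h] at hpc'
    exact hpc'.left_of_append
  have hauq : List.IsChain E ((a ++ [u]) ++ q) := by
    refine List.isChain_append.2 ⟨hau, hqc', ?_⟩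
    intro x hx y hy
    simp at hx
    rw [hqh] at hy
    simp at hy
    subst hx; subst hy; exact huw
  have hhead : ∀ r, ((a ++ [u]) ++ r).head? = some i := by
    intro r
    cases a <;> simpa using hph
  have hjq : j ∈ q := by
    have := hthrough ((a ++ [u]) ++ q)
      ⟨hauq, hhead q, by rw [List.getLast?_append_of_ne_nil _ hne]; exact hql⟩
    simp only [List.mem_append, List.mem_singleton] at this
    rcases this with (h | h) | h
    · exact absurd h hja
    · exact absurd h.symm huj
    · exact h
  obtain ⟨c, d, rfl⟩ := List.append_of_mem hjq
  have h : (a ++ [u]) ++ (c ++ j :: d) = ((a ++ [u]) ++ (c ++ [j])) ++ d := by simp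
  rw [h] at hauq
  refine ⟨(a ++ [u]) ++ (c ++ [j]), ⟨hauq.left_of_append, hhead _,
    by rw [← List.append_assoc, List.getLast?_concat]⟩, ?_⟩
  have hw : w ∈ c ++ [j] := by
    cases c <;> simp at hqh <;> simp [hqh]
  exact List.mem_append_right _ hw
end

section
/- Let n ≥ 1 and let E : Fin n → Fin n → Prop be a directed edge relation such that E u v implies u < v. Assume there is a unique sink t (t has no outgoing edge and every other vertex has at least one outgoing edge). Let i, j : Fin n with j ≠ t, and suppose some directed path from i to t avoids j. Then there exist a directed path ρ from i to t that does not contain j, a directed path ρ' from j to t, and a vertex k with j < k such that k lies on both ρ and ρ'. -/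
/-- Well-founded induction along `>`: following outgoing edges from `v` ends at the sink, and the
index never decreases on the way. -/
lemma exists_dirPath_sink {n : ℕ} (E : Fin n → Fin n → Prop)
    (hE : ∀ u v : Fin n, E u v → u < v) (t : Fin n)
    (hout : ∀ v : Fin n, v ≠ t → ∃ w : Fin n, E v w) (v : Fin n) :
    v ≤ t ∧ ∃ p, DirPath E v t p := by
  induction v using WellFoundedGT.induction with
  | ind v ih =>
    by_cases hv : v = t
    · subst hv
      exact ⟨le_rfl, [v], List.isChain_singleton v, rfl, rfl⟩
    · obtain ⟨w, hw⟩ := hout v hv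
      obtain ⟨hwt, p, hc, hh, hl⟩ := ih w (hE v w hw)
      refine ⟨(hE v w hw).le.trans hwt, v :: p, ?_, rfl, ?_⟩
      · refine List.isChain_cons.2 ⟨?_, hc⟩
        intro y hy
        rw [hh] at hy
        cases hy
        exact hw
      · simp [List.getLast?_cons, hl]

/-- **'Only if' direction of Proposition 3.**  In a DAG on `Fin n` whose edges
respect the topological order, with a unique sink `t` (no outgoing edge at `t`,
at least one outgoing edge at every other vertex), if some directed path from
`i` to `t` avoids `j` (`j ≠ t`), then there are a path `ρ` from `i` to `t` not
containing `j`, a path `ρ'` from `j` to `t`, and a vertex `k > j` lying on both. -/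
theorem relax_constraint_converse {n : ℕ} (hn : 1 ≤ n)
    (E : Fin n → Fin n → Prop)
    (hE : ∀ u v : Fin n, E u v → u < v)
    (t : Fin n)
    (ht : ∀ w : Fin n, ¬ E t w)
    (hout : ∀ v : Fin n, v ≠ t → ∃ w : Fin n, E v w)
    (i j : Fin n) (hjt : j ≠ t)
    (havoid : ∃ p : List (Fin n), DirPath E i t p ∧ j ∉ p) :
    ∃ (ρ ρ' : List (Fin n)) (k : Fin n),
      DirPath E i t ρ ∧ j ∉ ρ ∧ DirPath E j t ρ' ∧ j < k ∧ k ∈ ρ ∧ k ∈ ρ' := by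
  obtain ⟨ρ, hρ, hj⟩ := havoid
  obtain ⟨hle, ρ', hρ'⟩ := exists_dirPath_sink E hE t hout j
  exact ⟨ρ, ρ', t, hρ, hj, hρ', lt_of_le_of_ne hle hjt,
    List.mem_of_getLast? hρ.2.2, List.mem_of_getLast? hρ'.2.2⟩
end

section
/- Let V be a finite type, Λ a finite nonempty type, c : V → Λ → ℝ vertex costs, and let the edge set be E_A ∪ E_B (disjoint finite sets) with adapt costs a_e : Λ → Λ → ℝ. Let A, B ⊆ V satisfy A ∪ B = V and A ∩ B = {v₀} for a vertex v₀, with every edge of E_A having both endpoints in A and every edge of E_B having both endpoints in B. Then the minimum over all σ : V → Λ of [Σ_{u ∈ V} c_u(σ u) + Σ_{e ∈ E_A ∪ E_B} a_e(σ(src e), σ(tgt e))] equals min over λ ∈ Λ of [f(λ) + g(λ)], where f(λ) = min over σ_A : A → Λ with σ_A(v₀) = λ of (Σ_{u ∈ A} c_u(σ_A u) + Σ_{e ∈ E_A} a_e) and g(λ) = min over σ_B : B → Λ with σ_B(v₀) = λ of (Σ_{u ∈ B \ {v₀}} c_u(σ_B u) + Σ_{e ∈ E_B} a_e). -/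
/-!
Restricting a global assignment to `A` and to `B` gives two partial assignments that agree at `v₀`;
conversely, since `A ∩ B = {v₀}` and `A ∪ B = V`, two partial assignments agreeing at `v₀` glue to a
global one. The total cost is the sum of the two partial costs, because `V` is the disjoint union of
`A` and `B \ {v₀}` and the edge set is the disjoint union of `EA` and `EB`. The claim is thus an
instance of minimising a separable function over a fibre product of finite sets, which is
`sInf_fiberProduct`.
-/

/-- Minimising `FA + FB` over a fibre product `SA ×_Λ SB` of finite sets amounts to minimising over
each fibre separately and then over the base. The fibre product is presented by a finite set `S` with
projections `rA`, `rB` that hits every compatible pair. Surjectivity of `p` and `q` makes every fibre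
nonempty, so that no infimum is the default value `sInf ∅ = 0`. -/
theorem sInf_fiberProduct {S SA SB Λ : Type*} [Finite S] [Finite SA] [Finite SB] [Finite Λ]
    [Nonempty Λ] (F : S → ℝ) (FA : SA → ℝ) (FB : SB → ℝ) (p : SA → Λ) (q : SB → Λ)
    (rA : S → SA) (rB : S → SB) (hpq : ∀ s, p (rA s) = q (rB s))
    (hF : ∀ s, F s = FA (rA s) + FB (rB s))
    (hglue : ∀ α β, p α = q β → ∃ s, rA s = α ∧ rB s = β)
    (hp : Function.Surjective p) (hq : Function.Surjective q) :
    sInf {x : ℝ | ∃ s, x = F s} =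
      sInf {x : ℝ | ∃ l : Λ, x = sInf {y : ℝ | ∃ α, p α = l ∧ y = FA α}
        + sInf {y : ℝ | ∃ β, q β = l ∧ y = FB β}} := by
  have finF : {x : ℝ | ∃ s, x = F s}.Finite :=
    (Set.finite_range F).subset (by rintro _ ⟨s, rfl⟩; exact ⟨s, rfl⟩)
  have finA : ∀ l, {y : ℝ | ∃ α, p α = l ∧ y = FA α}.Finite := fun l =>
    (Set.finite_range FA).subset (by rintro _ ⟨s, -, rfl⟩; exact ⟨s, rfl⟩)
  have finB : ∀ l, {y : ℝ | ∃ β, q β = l ∧ y = FB β}.Finite := fun l =>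
    (Set.finite_range FB).subset (by rintro _ ⟨s, -, rfl⟩; exact ⟨s, rfl⟩)
  have finR : {x : ℝ | ∃ l : Λ, x = sInf {y : ℝ | ∃ α, p α = l ∧ y = FA α}
      + sInf {y : ℝ | ∃ β, q β = l ∧ y = FB β}}.Finite :=
    (Set.finite_range fun l => sInf {y : ℝ | ∃ α, p α = l ∧ y = FA α}
      + sInf {y : ℝ | ∃ β, q β = l ∧ y = FB β}).subset
        (by rintro _ ⟨l, rfl⟩; exact ⟨l, rfl⟩)
  have neA : ∀ l, {y : ℝ | ∃ α, p α = l ∧ y = FA α}.Nonempty := fun l =>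
    let ⟨α, h⟩ := hp l; ⟨_, α, h, rfl⟩
  have neB : ∀ l, {y : ℝ | ∃ β, q β = l ∧ y = FB β}.Nonempty := fun l =>
    let ⟨β, h⟩ := hq l; ⟨_, β, h, rfl⟩
  apply le_antisymm
  · obtain ⟨l₀⟩ := ‹Nonempty Λ›
    refine le_csInf ⟨_, l₀, rfl⟩ ?_
    rintro _ ⟨l, rfl⟩
    -- Both fibre minima are attained, and the minimisers glue.
    obtain ⟨α, hα, hyα⟩ := (neA l).csInf_mem (finA l)
    obtain ⟨β, hβ, hyβ⟩ := (neB l).csInf_mem (finB l)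
    obtain ⟨s, rfl, rfl⟩ := hglue α β (hα.trans hβ.symm)
    rw [hyα, hyβ, ← hF]
    exact csInf_le finF.bddBelow ⟨s, rfl⟩
  · have hne : Nonempty S := by
      obtain ⟨l⟩ := ‹Nonempty Λ›
      obtain ⟨α, hα⟩ := hp l
      obtain ⟨β, hβ⟩ := hq l
      obtain ⟨s, -⟩ := hglue α β (hα.trans hβ.symm)
      exact ⟨s⟩
    obtain ⟨s₀⟩ := hne
    refine le_csInf ⟨_, s₀, rfl⟩ ?_
    rintro _ ⟨s, rfl⟩
    rw [hF]
    exact (csInf_le finR.bddBelow ⟨p (rA s), rfl⟩).trans (add_le_add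
      (csInf_le (finA _).bddBelow ⟨rA s, rfl, rfl⟩)
      (csInf_le (finB _).bddBelow ⟨rB s, (hpq s).symm, rfl⟩))

/-- **Relaxation of constraints at a cut layer.**  The vertex `v₀` separates the
net into an upstream part `A` and a downstream part `B` (`A ∪ B = V`,
`A ∩ B = {v₀}`, every edge lying entirely within `A` or within `B`).  Then the
global minimum total cost over schema assignments `σ : V → Λ` equals
`min_{l ∈ Λ} (f l + g l)`, where `f l` is the constrained minimum over the part
`A` with `σ_A v₀ = l` (counting the cost of all vertices of `A`) and `g l` is
the constrained minimum over the part `B` with `σ_B v₀ = l` (counting the cost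
of the vertices of `B \ {v₀}` so `v₀` is not double-counted). -/
theorem relax_constraint_at_cut (V : Type*) [Fintype V] [DecidableEq V]
    (Λ : Type*) [Fintype Λ] [Nonempty Λ]
    (c : V → Λ → ℝ)
    (EA EB : Finset (V × V)) (hEdisj : Disjoint EA EB)
    (a : V × V → Λ → Λ → ℝ)
    (A B : Finset V) (v₀ : V)
    (hunion : A ∪ B = Finset.univ)
    (hinter : A ∩ B = {v₀})
    (hv₀A : v₀ ∈ A) (hv₀B : v₀ ∈ B)
    (hEA : ∀ e ∈ EA, e.1 ∈ A ∧ e.2 ∈ A)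
    (hEB : ∀ e ∈ EB, e.1 ∈ B ∧ e.2 ∈ B) :
    sInf {x : ℝ | ∃ σ : V → Λ,
        x = (∑ u : V, c u (σ u)) + ∑ e ∈ EA ∪ EB, a e (σ e.1) (σ e.2)}
      = sInf {x : ℝ | ∃ l : Λ,
          x = sInf {y : ℝ | ∃ σA : {u // u ∈ A} → Λ, σA ⟨v₀, hv₀A⟩ = l ∧
                y = (∑ u ∈ A.attach, c u.1 (σA u))
                  + ∑ e ∈ EA.attach,
                      a e.1 (σA ⟨e.1.1, (hEA e.1 e.2).1⟩)
                            (σA ⟨e.1.2, (hEA e.1 e.2).2⟩)}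
            + sInf {y : ℝ | ∃ σB : {u // u ∈ B} → Λ, σB ⟨v₀, hv₀B⟩ = l ∧
                y = (∑ u ∈ (B \ {v₀}).attach,
                      c u.1 (σB ⟨u.1, (Finset.mem_sdiff.mp u.2).1⟩))
                  + ∑ e ∈ EB.attach,
                      a e.1 (σB ⟨e.1.1, (hEB e.1 e.2).1⟩)
                            (σB ⟨e.1.2, (hEB e.1 e.2).2⟩)}} := by
  refine sInf_fiberProduct (S := V → Λ)
    (fun σ => (∑ u : V, c u (σ u)) + ∑ e ∈ EA ∪ EB, a e (σ e.1) (σ e.2))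
    (fun σA : {u // u ∈ A} → Λ => (∑ u ∈ A.attach, c u.1 (σA u))
      + ∑ e ∈ EA.attach, a e.1 (σA ⟨e.1.1, (hEA e.1 e.2).1⟩) (σA ⟨e.1.2, (hEA e.1 e.2).2⟩))
    (fun σB : {u // u ∈ B} → Λ =>
      (∑ u ∈ (B \ {v₀}).attach, c u.1 (σB ⟨u.1, (Finset.mem_sdiff.mp u.2).1⟩))
      + ∑ e ∈ EB.attach, a e.1 (σB ⟨e.1.1, (hEB e.1 e.2).1⟩) (σB ⟨e.1.2, (hEB e.1 e.2).2⟩))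
    (fun σA => σA ⟨v₀, hv₀A⟩) (fun σB => σB ⟨v₀, hv₀B⟩)
    (fun σ u => σ u) (fun σ u => σ u) (fun _ => rfl) ?_ ?_
    (fun l => ⟨fun _ => l, rfl⟩) (fun l => ⟨fun _ => l, rfl⟩)
  · intro σ
    have hB : B \ {v₀} = Finset.univ \ A := by
      rw [← hunion, ← hinter]
      ext u
      simp only [Finset.mem_sdiff, Finset.mem_inter, Finset.mem_union]
      tauto
    have hV : ∑ u : V, c u (σ u) = ∑ u ∈ A, c u (σ u) + ∑ u ∈ B \ {v₀}, c u (σ u) := by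
      rw [hB, add_comm, Finset.sum_sdiff (Finset.subset_univ A)]
    have h1 := Finset.sum_attach A fun u => c u (σ u)
    have h2 := Finset.sum_attach (B \ {v₀}) fun u => c u (σ u)
    have h3 := Finset.sum_attach EA fun e => a e (σ e.1) (σ e.2)
    have h4 := Finset.sum_attach EB fun e => a e (σ e.1) (σ e.2)
    simp only [hV, Finset.sum_union hEdisj, h1, h2, h3, h4]
    ring
  · intro σA σB h
    have hmemB : ∀ u, u ∉ A → u ∈ B := fun u hu =>
      (Finset.mem_union.mp (hunion ▸ Finset.mem_univ u)).resolve_left hu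
    refine ⟨fun u => if hu : u ∈ A then σA ⟨u, hu⟩ else σB ⟨u, hmemB u hu⟩, ?_, ?_⟩
    · funext u
      simp
    · funext ⟨u, hu⟩
      by_cases huA : u ∈ A
      · -- `A` and `B` overlap only in `v₀`, where the two assignments agree.
        obtain rfl : u = v₀ := Finset.mem_singleton.mp (hinter ▸ Finset.mem_inter.mpr ⟨huA, hu⟩)
        simpa [huA] using h
      · simp [huA]
end
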